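/- Let c > 0 and θ ≥ 0 be constants, and suppose (ρ,v): D → (0,∞) × ℝ is a twice continuously differentiable solution on an open set D ⊆ ℝ² of the isothermal Euler equations with friction ∂_t ρ + ∂_x (ρv) = 0, ∂_t (ρv) + ∂_x (ρv² + c²ρ) = −θ ρ v|v|. Then the velocity v satisfies on D the quasilinear wave equation v_{tt} = (c² − v²) v_{xx} − 2v (v_{tx} + (v_x)²) − 2 v_t v_x − 2θ |v| (v_t + (3/2) v v_x). -/

import Mathlib

open Filter Topology

/-!
Divide by the density: with `r = log ρ`, the mass balance becomes `r_t = -v_x - v r_x`, and the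
momentum balance (after subtracting `v` times the mass balance) becomes
`c² r_x = -(v_t + v v_x + θ v|v|)`. Since `r` is twice continuously differentiable, its mixed
partial derivatives agree. Differentiating the first equation in `x` and the second in `t` and in
`x`, and eliminating `r_x`, `r_xx` and `r_tx`, leaves an equation in `v` alone, which is the wave
equation. The friction term causes no trouble where `v` vanishes, because `y ↦ y|y|` is
differentiable on all of `ℝ` with derivative `2|y|`.
-/

lemma hasDerivAt_mul_abs_self (y : ℝ) : HasDerivAt (fun z : ℝ => z * |z|) (2 * |y|) y := by
  rcases eq_or_ne y 0 with rfl | hy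
  · rw [hasDerivAt_iff_tendsto_slope]
    have h : Tendsto (fun z : ℝ => |z|) (𝓝[≠] 0) (𝓝 (2 * |0|)) := by
      have := (continuous_abs (G := ℝ)).tendsto 0
      simpa using this.mono_left nhdsWithin_le_nhds
    refine h.congr' ?_
    filter_upwards [self_mem_nhdsWithin] with z hz
    have hz : z ≠ 0 := hz
    simp [slope_def_field, hz]
  · refine ((hasDerivAt_id' y).fun_mul (hasDerivAt_abs hy)).congr_deriv ?_
    rcases lt_or_gt_of_ne hy with h | h
    · simp [abs_of_neg h, sign_neg h]; ring
    · simp [abs_of_pos h, sign_pos h]; ring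

section partials

variable {D : Set (ℝ × ℝ)} {f : ℝ → ℝ → ℝ} {t x : ℝ}

lemma hasDerivAt_fst_of_hasFDerivAt {g : ℝ × ℝ → ℝ} {L : ℝ × ℝ →L[ℝ] ℝ}
    (h : HasFDerivAt g L (t, x)) : HasDerivAt (fun s => g (s, x)) (L (1, 0)) t :=
  h.comp_hasDerivAt t ((hasDerivAt_id t).prodMk (hasDerivAt_const t x))

lemma hasDerivAt_snd_of_hasFDerivAt {g : ℝ × ℝ → ℝ} {L : ℝ × ℝ →L[ℝ] ℝ}
    (h : HasFDerivAt g L (t, x)) : HasDerivAt (fun y => g (t, y)) (L (0, 1)) x :=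
  h.comp_hasDerivAt x ((hasDerivAt_const x t).prodMk (hasDerivAt_id x))

lemma hasFDerivAt_uncurry (hD : IsOpen D) (hf : ContDiffOn ℝ 1 (Function.uncurry f) D)
    (h : (t, x) ∈ D) :
    HasFDerivAt (Function.uncurry f) (fderiv ℝ (Function.uncurry f) (t, x)) (t, x) :=
  ((hf.contDiffAt (hD.mem_nhds h)).differentiableAt (by norm_num)).hasFDerivAt

lemma hasDerivAt_partial_fst (hD : IsOpen D) (hf : ContDiffOn ℝ 1 (Function.uncurry f) D)
    (h : (t, x) ∈ D) : HasDerivAt (fun s => f s x) (deriv (fun s => f s x) t) t :=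
  (hasDerivAt_fst_of_hasFDerivAt (hasFDerivAt_uncurry hD hf h)).differentiableAt.hasDerivAt

lemma hasDerivAt_partial_snd (hD : IsOpen D) (hf : ContDiffOn ℝ 1 (Function.uncurry f) D)
    (h : (t, x) ∈ D) : HasDerivAt (fun y => f t y) (deriv (fun y => f t y) x) x :=
  (hasDerivAt_snd_of_hasFDerivAt (hasFDerivAt_uncurry hD hf h)).differentiableAt.hasDerivAt

lemma partial_fst_eq_fderiv (hD : IsOpen D) (hf : ContDiffOn ℝ 1 (Function.uncurry f) D)
    (h : (t, x) ∈ D) :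
    deriv (fun s => f s x) t = fderiv ℝ (Function.uncurry f) (t, x) (1, 0) :=
  (hasDerivAt_fst_of_hasFDerivAt (hasFDerivAt_uncurry hD hf h)).deriv

lemma partial_snd_eq_fderiv (hD : IsOpen D) (hf : ContDiffOn ℝ 1 (Function.uncurry f) D)
    (h : (t, x) ∈ D) :
    deriv (fun y => f t y) x = fderiv ℝ (Function.uncurry f) (t, x) (0, 1) :=
  (hasDerivAt_snd_of_hasFDerivAt (hasFDerivAt_uncurry hD hf h)).deriv

lemma contDiffOn_partial_fst (hD : IsOpen D) (hf : ContDiffOn ℝ 2 (Function.uncurry f) D) :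
    ContDiffOn ℝ 1 (Function.uncurry fun t x => deriv (fun s => f s x) t) D := by
  have h1 : ContDiffOn ℝ 1 (fderiv ℝ (Function.uncurry f)) D :=
    hf.fderiv_of_isOpen hD (by norm_num)
  refine (h1.clm_apply (contDiffOn_const (c := ((1 : ℝ), (0 : ℝ))))).congr ?_
  rintro ⟨t, x⟩ h
  exact partial_fst_eq_fderiv hD (hf.of_le (by norm_num)) h

lemma contDiffOn_partial_snd (hD : IsOpen D) (hf : ContDiffOn ℝ 2 (Function.uncurry f) D) :
    ContDiffOn ℝ 1 (Function.uncurry fun t x => deriv (fun y => f t y) x) D := by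
  have h1 : ContDiffOn ℝ 1 (fderiv ℝ (Function.uncurry f)) D :=
    hf.fderiv_of_isOpen hD (by norm_num)
  refine (h1.clm_apply (contDiffOn_const (c := ((0 : ℝ), (1 : ℝ))))).congr ?_
  rintro ⟨t, x⟩ h
  exact partial_snd_eq_fderiv hD (hf.of_le (by norm_num)) h

lemma eventually_mem_fst (hD : IsOpen D) (h : (t, x) ∈ D) : ∀ᶠ s in 𝓝 t, (s, x) ∈ D :=
  (Continuous.prodMk_left x).continuousAt.eventually (hD.mem_nhds h)

lemma eventually_mem_snd (hD : IsOpen D) (h : (t, x) ∈ D) : ∀ᶠ y in 𝓝 x, (t, y) ∈ D :=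
  (Continuous.prodMk_right t).continuousAt.eventually (hD.mem_nhds h)

/-- Symmetry of the mixed second partial derivatives, for iterated one-variable derivatives. -/
lemma partial_comm (hD : IsOpen D) (hf : ContDiffOn ℝ 2 (Function.uncurry f) D)
    (h : (t, x) ∈ D) :
    deriv (fun s => deriv (fun y => f s y) x) t = deriv (fun y => deriv (fun s => f s y) t) x := by
  have hf1 : ContDiffOn ℝ 1 (Function.uncurry f) D := hf.of_le (by norm_num)
  have hfd : HasFDerivAt (fderiv ℝ (Function.uncurry f))
      (fderiv ℝ (fderiv ℝ (Function.uncurry f)) (t, x)) (t, x) :=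
    (((hf.fderiv_of_isOpen hD (m := 1) (by norm_num)).contDiffAt
      (hD.mem_nhds h)).differentiableAt (by norm_num)).hasFDerivAt
  have hsymm := (hf.contDiffAt (hD.mem_nhds h)).isSymmSndFDerivAt (by simp)
  have e1 : (fun s => deriv (fun y => f s y) x) =ᶠ[𝓝 t]
      fun s => fderiv ℝ (Function.uncurry f) (s, x) (0, 1) :=
    (eventually_mem_fst hD h).mono fun s hs => partial_snd_eq_fderiv hD hf1 hs
  have e2 : (fun y => deriv (fun s => f s y) t) =ᶠ[𝓝 x]
      fun y => fderiv ℝ (Function.uncurry f) (t, y) (1, 0) :=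
    (eventually_mem_snd hD h).mono fun y hy => partial_fst_eq_fderiv hD hf1 hy
  have d1 := hasDerivAt_fst_of_hasFDerivAt
    (hfd.clm_apply (hasFDerivAt_const ((0 : ℝ), (1 : ℝ)) (t, x)))
  have d2 := hasDerivAt_snd_of_hasFDerivAt
    (hfd.clm_apply (hasFDerivAt_const ((1 : ℝ), (0 : ℝ)) (t, x)))
  rw [e1.deriv_eq, e2.deriv_eq, d1.deriv, d2.deriv]
  simpa using hsymm (1, 0) (0, 1)

end partials


/-- If `(ρ,v)` is a twice continuously differentiable positive-density
solution of the isothermal Euler equations with friction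
`∂_t ρ + ∂_x (ρv) = 0`, `∂_t (ρv) + ∂_x (ρv² + c²ρ) = −θ ρ v|v|`
on an open set `D ⊆ ℝ²`, then the velocity satisfies on `D` the quasilinear wave
equation `v_tt = (c² − v²) v_xx − 2v (v_tx + v_x²) − 2 v_t v_x − 2θ|v|(v_t + (3/2) v v_x)`. -/
theorem isothermal_euler_velocity_wave_equation
    (c θ : ℝ) (hc : 0 < c) (hθ : 0 ≤ θ)
    (D : Set (ℝ × ℝ)) (hD : IsOpen D)
    (ρ v : ℝ → ℝ → ℝ)
    (hρreg : ContDiffOn ℝ 2 (Function.uncurry ρ) D)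
    (hvreg : ContDiffOn ℝ 2 (Function.uncurry v) D)
    (hpos : ∀ t x : ℝ, (t, x) ∈ D → 0 < ρ t x)
    (hmass : ∀ t x : ℝ, (t, x) ∈ D →
      deriv (fun s => ρ s x) t + deriv (fun y => ρ t y * v t y) x = 0)
    (hmom : ∀ t x : ℝ, (t, x) ∈ D →
      deriv (fun s => ρ s x * v s x) t
        + deriv (fun y => ρ t y * (v t y) ^ 2 + c ^ 2 * ρ t y) x
        = -θ * (ρ t x * (v t x * |v t x|))) :
    ∀ t x : ℝ, (t, x) ∈ D →
      deriv (fun s => deriv (fun s' => v s' x) s) t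
        = (c ^ 2 - (v t x) ^ 2) * deriv (fun y => deriv (fun y' => v t y') y) x
          - 2 * v t x * (deriv (fun s => deriv (fun y => v s y) x) t
              + (deriv (fun y => v t y) x) ^ 2)
          - 2 * deriv (fun s => v s x) t * deriv (fun y => v t y) x
          - 2 * θ * |v t x| * (deriv (fun s => v s x) t
              + (3 / 2) * v t x * deriv (fun y => v t y) x) := by
  have hρ1 : ContDiffOn ℝ 1 (Function.uncurry ρ) D := hρreg.of_le (by norm_num)
  have hv1 : ContDiffOn ℝ 1 (Function.uncurry v) D := hvreg.of_le (by norm_num)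
  obtain ⟨r, hr⟩ : ∃ r : ℝ → ℝ → ℝ, r = fun t x => Real.log (ρ t x) := ⟨_, rfl⟩
  have hrreg : ContDiffOn ℝ 2 (Function.uncurry r) D := by
    rw [hr]
    exact hρreg.log fun p hp => (hpos p.1 p.2 hp).ne'
  have hr1 : ContDiffOn ℝ 1 (Function.uncurry r) D := hrreg.of_le (by norm_num)
  have hrt : ∀ t x, (t, x) ∈ D →
      deriv (fun s => ρ s x) t = ρ t x * deriv (fun s => r s x) t := by
    intro t x h
    have := (hasDerivAt_partial_fst hD hρ1 h).log (hpos t x h).ne'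
    rw [hr, this.deriv]
    field_simp [(hpos t x h).ne']
  have hrx : ∀ t x, (t, x) ∈ D →
      deriv (fun y => ρ t y) x = ρ t x * deriv (fun y => r t y) x := by
    intro t x h
    have := (hasDerivAt_partial_snd hD hρ1 h).log (hpos t x h).ne'
    rw [hr, this.deriv]
    field_simp [(hpos t x h).ne']
  -- The two balance laws in the unknowns `r = log ρ` and `v`, with `ρ` divided out.
  have hmass' : ∀ t x, (t, x) ∈ D → deriv (fun s => r s x) t =
      -deriv (fun y => v t y) x - v t x * deriv (fun y => r t y) x := by
    intro t x h
    have e := hmass t x h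
    rw [((hasDerivAt_partial_snd hD hρ1 h).fun_mul (hasDerivAt_partial_snd hD hv1 h)).deriv,
      hrt t x h, hrx t x h] at e
    apply mul_left_cancel₀ (hpos t x h).ne'
    linear_combination e
  have hmom' : ∀ t x, (t, x) ∈ D → c ^ 2 * deriv (fun y => r t y) x =
      -(deriv (fun s => v s x) t + v t x * deriv (fun y => v t y) x
        + θ * (v t x * |v t x|)) := by
    intro t x h
    have e := hmom t x h
    have hρx := hasDerivAt_partial_snd hD hρ1 h
    have hvx := hasDerivAt_partial_snd hD hv1 h
    rw [((hasDerivAt_partial_fst hD hρ1 h).fun_mul (hasDerivAt_partial_fst hD hv1 h)).deriv,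
      ((hρx.fun_mul (hvx.fun_pow 2)).fun_add (hρx.const_mul (c ^ 2))).deriv,
      hrt t x h, hrx t x h, hmass' t x h] at e
    apply mul_left_cancel₀ (hpos t x h).ne'
    push_cast at e
    linear_combination e
  intro t x h
  have vt := hasDerivAt_partial_fst hD hv1 h
  have vx := hasDerivAt_partial_snd hD hv1 h
  have vtt := hasDerivAt_partial_fst hD (contDiffOn_partial_fst hD hvreg) h
  have vtx := hasDerivAt_partial_snd hD (contDiffOn_partial_fst hD hvreg) h
  have vxt := hasDerivAt_partial_fst hD (contDiffOn_partial_snd hD hvreg) h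
  have vxx := hasDerivAt_partial_snd hD (contDiffOn_partial_snd hD hvreg) h
  have rxt := hasDerivAt_partial_fst hD (contDiffOn_partial_snd hD hrreg) h
  have rxx := hasDerivAt_partial_snd hD (contDiffOn_partial_snd hD hrreg) h
  have qt : HasDerivAt (fun s => v s x * |v s x|)
      (2 * |v t x| * deriv (fun s => v s x) t) t :=
    HasDerivAt.comp (h₂ := fun z : ℝ => z * |z|) t (hasDerivAt_mul_abs_self (v t x)) vt
  have qx : HasDerivAt (fun y => v t y * |v t y|)
      (2 * |v t x| * deriv (fun y => v t y) x) x :=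
    HasDerivAt.comp (h₂ := fun z : ℝ => z * |z|) x (hasDerivAt_mul_abs_self (v t x)) vx
  have emass_x : (fun y => deriv (fun s => r s y) t) =ᶠ[𝓝 x] fun y =>
      -deriv (fun y => v t y) y - v t y * deriv (fun y => r t y) y :=
    (eventually_mem_snd hD h).mono fun y hy => hmass' t y hy
  have emom_t : (fun s => c ^ 2 * deriv (fun y => r s y) x) =ᶠ[𝓝 t] fun s =>
      -(deriv (fun s => v s x) s + v s x * deriv (fun y => v s y) x
        + θ * (v s x * |v s x|)) :=
    (eventually_mem_fst hD h).mono fun s hs => hmom' s x hs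
  have emom_x : (fun y => c ^ 2 * deriv (fun y => r t y) y) =ᶠ[𝓝 x] fun y =>
      -(deriv (fun s => v s y) t + v t y * deriv (fun y => v t y) y
        + θ * (v t y * |v t y|)) :=
    (eventually_mem_snd hD h).mono fun y hy => hmom' t y hy
  have mass_x := emass_x.deriv_eq.trans (vxx.fun_neg.fun_sub (vx.fun_mul rxx)).deriv
  have mom_t := (rxt.const_mul (c ^ 2)).deriv.symm.trans (emom_t.deriv_eq.trans
    ((vtt.fun_add (vt.fun_mul vxt)).fun_add (qt.const_mul θ)).fun_neg.deriv)
  have mom_x := (rxx.const_mul (c ^ 2)).deriv.symm.trans (emom_x.deriv_eq.trans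
    ((vtx.fun_add (vx.fun_mul vxx)).fun_add (qx.const_mul θ)).fun_neg.deriv)
  rw [← partial_comm hD hrreg h] at mass_x
  rw [← partial_comm hD hvreg h] at mom_x
  linear_combination mom_t - c ^ 2 * mass_x + v t x * mom_x
    + deriv (fun y => v t y) x * hmom' t x h
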